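/- Let 𝕎◇ ⊆ [−1/2, 1/2]² be a single parallelogram band, i.e., 𝕎◇ = {(f,g) : |a f + b g − u| ≤ W⁰ and |c f + d g − v| ≤ W¹} with ad − bc ≠ 0 and W⁰, W¹ > 0. Then there exists a constant C > 0 (depending only on a, b, c, d, W⁰, W¹) such that for all M, N ≥ 2, the squared Frobenius norm of B_{(M,N),𝕎◇} satisfies ‖B_{(M,N),𝕎◇}‖_F² ≥ MN·‖𝕎◇‖ − C·(M·log N + N·log M), where ‖𝕎◇‖ = 4W⁰W¹/|ad − bc| is the Lebesgue measure of 𝕎◇. -/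

import Mathlib

open MeasureTheory Matrix Real Set

/-- The 2-D prolate matrix `B_{(M,N),𝕎}`, indexed by pairs, with entries
`∫_𝕎 exp(2πi (f (m−p) + g (n−q))) df dg`. -/
noncomputable def prolate2D (M N : ℕ) (𝕎 : Set (ℝ × ℝ)) :
    Matrix (Fin M × Fin N) (Fin M × Fin N) ℂ :=
  fun i j => ∫ fg in 𝕎,
    Complex.exp (2 * (Real.pi : ℂ) * Complex.I *
      ((fg.1 : ℂ) * (((i.1 : ℕ) : ℂ) - ((j.1 : ℕ) : ℂ)) +
       (fg.2 : ℂ) * (((i.2 : ℕ) : ℂ) - ((j.2 : ℕ) : ℂ))))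

/-- The parallelogram band `{(f,g) : |af + bg − u| ≤ W0 and |cf + dg − v| ≤ W1}`. -/
def pband (a b c d u v W0 W1 : ℝ) : Set (ℝ × ℝ) :=
  {fg : ℝ × ℝ | |a * fg.1 + b * fg.2 - u| ≤ W0 ∧ |c * fg.1 + d * fg.2 - v| ≤ W1}

/-! The entries of the prolate matrix are the Fourier coefficients of the indicator function of `𝕎`
at differences of indices, so row `(m, n)` collects the coefficients at a finite rectangle of lags.
By Parseval, the squared coefficients over all of `ℤ²` sum to the area of `𝕎`, and each row falls
short of the area only by the coefficients `(k, l)` with `k` or `l` outside the rectangle.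

Since `𝕎` is convex, its sections parallel to the axes are intervals, whose Fourier coefficient at
`k ≠ 0` is at most `1 / (π |k|)`. Parseval in the other variable bounds the squared coefficients on
the line `k` by `1 / (π k)²`. Hence row `(m, n)` loses `O(1 / (m + 1) + 1 / (M - m))` to the lags
`k`, and summing over the rows gives `N` times a harmonic sum, of size `O(N log M)`. -/

open scoped ENNReal FourierTransform

section LagSums

lemma tsum_inv_sq_add_le (p : ℕ) :
    ∑' j : ℕ, ENNReal.ofReal (((p + 1 + j : ℝ) ^ 2)⁻¹) ≤ ENNReal.ofReal (2 / (p + 1)) := by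
  refine ENNReal.tsum_le_of_sum_range_le fun n => ?_
  rw [← ENNReal.ofReal_sum_of_nonneg fun _ _ => by positivity]
  refine ENNReal.ofReal_le_ofReal (le_trans (le_of_eq ?_) (sum_Ioo_inv_sq_le p (p + 1 + n)))
  rw [← Finset.Ico_add_one_left_eq_Ioo]
  simp [Finset.sum_Ico_eq_sum_range]

lemma tsum_compl_Icc_inv_sq_le (p q : ℕ) :
    ∑' k : ↥((Finset.Icc (-p : ℤ) q : Set ℤ)ᶜ), ENNReal.ofReal (((k : ℝ) ^ 2)⁻¹) ≤
      ENNReal.ofReal (2 / (p + 1)) + ENNReal.ofReal (2 / (q + 1)) := by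
  let below (j : ℕ) : ℤ := -(p + 1 + j)
  let above (j : ℕ) : ℤ := q + 1 + j
  have hbelow : below.Injective := fun i j h => by simpa [below] using h
  have habove : above.Injective := fun i j h => by simpa [above] using h
  have hcover : (Finset.Icc (-p : ℤ) q : Set ℤ)ᶜ ⊆ range below ∪ range above := by
    intro k hk
    rw [Finset.coe_Icc, mem_compl_iff, mem_Icc, not_and_or, not_le, not_le] at hk
    rcases hk with hk | hk
    · exact Or.inl ⟨(-k - p - 1).toNat, by grind⟩
    · exact Or.inr ⟨(k - q - 1).toNat, by grind⟩
  let f (k : ℤ) : ℝ≥0∞ := ENNReal.ofReal (((k : ℝ) ^ 2)⁻¹)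
  calc ∑' k : ↥((Finset.Icc (-p : ℤ) q : Set ℤ)ᶜ), f k
      ≤ ∑' k : ↥(range below), f k + ∑' k : ↥(range above), f k :=
        (ENNReal.tsum_mono_subtype f hcover).trans (ENNReal.tsum_union_le f _ _)
    _ = ∑' j, f (below j) + ∑' j, f (above j) := by
        rw [tsum_range f hbelow, tsum_range f habove]
    _ ≤ _ := by
        simp only [f, below, above, Int.cast_neg, Int.cast_add, Int.cast_natCast, Int.cast_one,
          neg_sq]
        exact add_le_add (tsum_inv_sq_add_le p) (tsum_inv_sq_add_le q)

/-- The lags `p - m` with `p < M`: the diagonals of an `M × M` Toeplitz matrix that meet row `m`. -/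
noncomputable def lags {M : ℕ} (m : Fin M) : Finset ℤ := Finset.Icc (-(m : ℤ)) m.rev

lemma sum_fin_sub_eq_sum_lags {A : Type*} [AddCommMonoid A] {M : ℕ} (F : ℤ → A) (m : Fin M) :
    ∑ p : Fin M, F (p - m) = ∑ k ∈ lags m, F k := by
  refine Finset.sum_bij (fun p _ => (p : ℤ) - m) (fun p _ => ?_) (fun p _ q _ h => ?_)
    (fun k hk => ?_) fun _ _ => rfl
  · simp only [lags, Fin.val_rev, Finset.mem_Icc]
    omega
  · exact Fin.ext (by omega)
  · simp only [lags, Fin.val_rev, Finset.mem_Icc] at hk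
    exact ⟨⟨(k + m).toNat, by omega⟩, Finset.mem_univ _, by simp only; omega⟩

lemma sum_inv_add_one_le_one_add_log (M : ℕ) :
    ∑ m : Fin M, ((m : ℝ) + 1)⁻¹ ≤ 1 + log M := by
  refine le_of_eq_of_le ?_ (harmonic_le_one_add_log M)
  simp [harmonic, Fin.sum_univ_eq_sum_range fun m : ℕ => ((m : ℝ) + 1)⁻¹]

lemma sum_tsum_compl_lags_inv_sq_le (M : ℕ) :
    ∑ m : Fin M, ∑' k : ↥((lags m : Set ℤ)ᶜ), ENNReal.ofReal (((k : ℝ) ^ 2)⁻¹) ≤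
      ENNReal.ofReal (4 * (1 + log M)) := by
  calc ∑ m : Fin M, ∑' k : ↥((lags m : Set ℤ)ᶜ), ENNReal.ofReal (((k : ℝ) ^ 2)⁻¹)
      ≤ ∑ m : Fin M, (ENNReal.ofReal (2 / (m + 1)) + ENNReal.ofReal (2 / (m.rev + 1))) :=
        Finset.sum_le_sum fun m _ => tsum_compl_Icc_inv_sq_le m m.rev
    _ = 2 * ∑ m : Fin M, ENNReal.ofReal (2 / (m + 1)) := by
        rw [Finset.sum_add_distrib, two_mul]
        exact congrArg _ <|
          Equiv.sum_comp Fin.revPerm fun m : Fin M => ENNReal.ofReal (2 / ((m : ℝ) + 1))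
    _ = ENNReal.ofReal (4 * ∑ m : Fin M, ((m : ℝ) + 1)⁻¹) := by
        rw [← ENNReal.ofReal_sum_of_nonneg fun _ _ => by positivity, ← ENNReal.ofReal_ofNat 2,
          ← ENNReal.ofReal_mul zero_le_two]
        simp only [div_eq_mul_inv, ← Finset.mul_sum, ← mul_assoc]
        norm_num
    _ ≤ _ := ENNReal.ofReal_le_ofReal (by gcongr; exact sum_inv_add_one_le_one_add_log M)

lemma tsum_tsum_le_sum_sum_add_tsum_compl {ι κ : Type*} (a : ι → κ → ℝ≥0∞)
    (s : Finset ι) (t : Finset κ) :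
    ∑' i, ∑' j, a i j ≤ ∑ i ∈ s, ∑ j ∈ t, a i j +
      (∑' i : ↥((s : Set ι)ᶜ), ∑' j, a i j + ∑' j : ↥((t : Set κ)ᶜ), ∑' i, a i j) := by
  have hcols : ∑ i ∈ s, ∑' j : ↥((t : Set κ)ᶜ), a i j ≤ ∑' j : ↥((t : Set κ)ᶜ), ∑' i, a i j := by
    rw [ENNReal.tsum_comm]
    exact ENNReal.sum_le_tsum s
  calc ∑' i, ∑' j, a i j
      = ∑ i ∈ s, ∑' j, a i j + ∑' i : ↥((s : Set ι)ᶜ), ∑' j, a i j :=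
        (ENNReal.sum_add_tsum_compl s _).symm
    _ = ∑ i ∈ s, ∑ j ∈ t, a i j + ∑ i ∈ s, ∑' j : ↥((t : Set κ)ᶜ), a i j +
          ∑' i : ↥((s : Set ι)ᶜ), ∑' j, a i j := by
        simp only [← Finset.sum_add_distrib, ENNReal.sum_add_tsum_compl]
    _ ≤ _ := by rw [add_assoc, add_comm (∑' i : ↥((s : Set ι)ᶜ), _)]; gcongr

variable {c : ℝ≥0∞}

lemma sum_tsum_compl_lags_le {r : ℤ → ℝ≥0∞}
    (hr : ∀ k ≠ 0, r k ≤ c * ENNReal.ofReal (((k : ℝ) ^ 2)⁻¹)) (M : ℕ) :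
    ∑ m : Fin M, ∑' k : ↥((lags m : Set ℤ)ᶜ), r k ≤ c * ENNReal.ofReal (4 * (1 + log M)) := by
  calc ∑ m : Fin M, ∑' k : ↥((lags m : Set ℤ)ᶜ), r k
      ≤ ∑ m : Fin M, ∑' k : ↥((lags m : Set ℤ)ᶜ), c * ENNReal.ofReal (((k : ℝ) ^ 2)⁻¹) := by
        refine Finset.sum_le_sum fun m _ => ENNReal.tsum_le_tsum fun k => hr k fun hk => k.2 ?_
        simp [hk, lags]
    _ = c * ∑ m : Fin M, ∑' k : ↥((lags m : Set ℤ)ᶜ), ENNReal.ofReal (((k : ℝ) ^ 2)⁻¹) := by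
        simp only [ENNReal.tsum_mul_left, Finset.mul_sum]
    _ ≤ _ := by gcongr; exact sum_tsum_compl_lags_inv_sq_le M

lemma sum_sum_fin_prod_eq_sum_lags {A : Type*} [AddCommMonoid A] {M N : ℕ} (a : ℤ → ℤ → A)
    (i : Fin M × Fin N) :
    ∑ j : Fin M × Fin N, a (j.1 - i.1) (j.2 - i.2) = ∑ k ∈ lags i.1, ∑ l ∈ lags i.2, a k l := by
  simp only [Fintype.sum_prod_type, sum_fin_sub_eq_sum_lags (a _) i.2]
  exact sum_fin_sub_eq_sum_lags (fun k => ∑ l ∈ lags i.2, a k l) i.1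

lemma mul_tsum_tsum_le_sum_sum_sub_add {a : ℤ → ℤ → ℝ≥0∞}
    (hrow : ∀ k ≠ 0, ∑' l, a k l ≤ c * ENNReal.ofReal (((k : ℝ) ^ 2)⁻¹))
    (hcol : ∀ l ≠ 0, ∑' k, a k l ≤ c * ENNReal.ofReal (((l : ℝ) ^ 2)⁻¹)) (M N : ℕ) :
    M * N * ∑' k, ∑' l, a k l ≤
      ∑ i : Fin M × Fin N, ∑ j : Fin M × Fin N, a (j.1 - i.1) (j.2 - i.2) +
        (N * (c * ENNReal.ofReal (4 * (1 + log M))) +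
          M * (c * ENNReal.ofReal (4 * (1 + log N)))) := by
  let rowTail (m : Fin M) := ∑' k : ↥((lags m : Set ℤ)ᶜ), ∑' l, a k l
  let colTail (n : Fin N) := ∑' l : ↥((lags n : Set ℤ)ᶜ), ∑' k, a k l
  calc M * N * ∑' k, ∑' l, a k l = ∑ _i : Fin M × Fin N, ∑' k, ∑' l, a k l := by simp
    _ ≤ ∑ i : Fin M × Fin N, (∑ j : Fin M × Fin N, a (j.1 - i.1) (j.2 - i.2) +
          (rowTail i.1 + colTail i.2)) := by
        gcongr with i
        rw [sum_sum_fin_prod_eq_sum_lags]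
        exact tsum_tsum_le_sum_sum_add_tsum_compl a _ _
    _ = ∑ i : Fin M × Fin N, ∑ j : Fin M × Fin N, a (j.1 - i.1) (j.2 - i.2) +
          (N * ∑ m, rowTail m + M * ∑ n, colTail n) := by
        simp only [Finset.sum_add_distrib, Fintype.sum_prod_type, Finset.sum_const,
          Finset.card_univ, Fintype.card_fin, nsmul_eq_mul, Finset.mul_sum]
    _ ≤ _ := by
        gcongr
        · exact sum_tsum_compl_lags_le hrow M
        · exact sum_tsum_compl_lags_le hcol N

end LagSums

section FourierCoefficients

lemma fourierCoeffOn_eq_fourier {φ : ℝ → ℂ} {α : ℝ} (hφ : φ.support ⊆ Icc α (α + 1)) (k : ℤ) :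
    fourierCoeffOn (lt_add_one α) φ k = 𝓕 φ k := by
  rw [fourierCoeffOn_eq_integral, intervalIntegral.integral_of_le (lt_add_one α).le,
    ← integral_Icc_eq_integral_Ioc, Real.fourier_real_eq_integral_exp_smul,
    setIntegral_eq_integral_of_forall_compl_eq_zero
      fun x hx => by rw [Function.notMem_support.1 (mt (@hφ x) hx), smul_zero]]
  simp only [add_sub_cancel_left, div_one, one_smul, fourier_coe_apply]
  refine integral_congr_ae (.of_forall fun x => congrArg (Complex.exp · • φ x) ?_)
  push_cast
  ring

lemma tsum_enorm_sq_fourier_eq_lintegral {φ : ℝ → ℂ} {α : ℝ} (hφ : MemLp φ 2)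
    (hsupp : φ.support ⊆ Icc α (α + 1)) :
    ∑' k : ℤ, ‖𝓕 φ (k : ℝ)‖ₑ ^ 2 = ∫⁻ x, ‖φ x‖ₑ ^ 2 := by
  have hparseval := hasSum_sq_fourierCoeffOn (lt_add_one α) (hφ.restrict _)
  rw [intervalIntegral.integral_of_le (lt_add_one α).le, ← integral_Icc_eq_integral_Ioc,
    setIntegral_eq_integral_of_forall_compl_eq_zero
      fun x hx => by rw [Function.notMem_support.1 (mt (@hsupp x) hx), norm_zero, sq, zero_mul],
    add_sub_cancel_left, inv_one, one_smul] at hparseval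
  simp only [fourierCoeffOn_eq_fourier hsupp] at hparseval
  simp only [← ofReal_norm, ← ENNReal.ofReal_pow (norm_nonneg _)]
  rw [← ENNReal.ofReal_tsum_of_nonneg (fun _ => by positivity) hparseval.summable,
    hparseval.tsum_eq, ofReal_integral_eq_lintegral_ofReal (hφ.integrable_norm_pow two_ne_zero)
      (.of_forall fun _ => by positivity)]

lemma norm_intervalIntegral_fourierChar_le {ξ : ℝ} (hξ : ξ ≠ 0) (a b : ℝ) :
    ‖∫ x in a..b, (𝐞 (-(x * ξ)) : ℂ)‖ ≤ 1 / (π * |ξ|) := by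
  have hc : (-(2 * π * ξ) : ℝ) * Complex.I ≠ 0 := by simp [hξ, pi_ne_zero]
  have hexp (x : ℝ) : (𝐞 (-(x * ξ)) : ℂ) = Complex.exp ((-(2 * π * ξ) : ℝ) * Complex.I * x) := by
    rw [Real.fourierChar_apply]
    push_cast
    ring_nf
  have hnum : ‖(𝐞 (-(b * ξ)) : ℂ) - 𝐞 (-(a * ξ))‖ ≤ 2 := by
    simpa only [Circle.norm_coe, one_add_one_eq_two] using
      norm_sub_le (𝐞 (-(b * ξ)) : ℂ) (𝐞 (-(a * ξ)))
  calc ‖∫ x in a..b, (𝐞 (-(x * ξ)) : ℂ)‖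
      = ‖(𝐞 (-(b * ξ)) : ℂ) - 𝐞 (-(a * ξ))‖ / (2 * (π * |ξ|)) := by
        simp only [hexp, integral_exp_mul_complex hc, norm_div]
        simp [abs_of_pos pi_pos, mul_assoc]
    _ ≤ 2 / (2 * (π * |ξ|)) := by gcongr
    _ = 1 / (π * |ξ|) := by rw [div_mul_cancel_left₀ two_ne_zero, one_div]

lemma fourier_indicator_one {s : Set ℝ} (hs : MeasurableSet s) (ξ : ℝ) :
    𝓕 (s.indicator 1 : ℝ → ℂ) ξ = ∫ x in s, (𝐞 (-(x * ξ)) : ℂ) := by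
  rw [Real.fourier_real_eq, ← integral_indicator hs]
  congr with x
  by_cases hx : x ∈ s <;> simp [hx, Circle.smul_def]

lemma norm_fourier_indicator_le_of_ordConnected {s : Set ℝ} (hs : s.OrdConnected)
    (hbdd : Bornology.IsBounded s) {ξ : ℝ} (hξ : ξ ≠ 0) :
    ‖𝓕 (s.indicator 1 : ℝ → ℂ) ξ‖ ≤ 1 / (π * |ξ|) := by
  obtain rfl | hne := s.eq_empty_or_nonempty
  · rw [fourier_indicator_one .empty, setIntegral_empty, norm_zero]
    positivity
  have hIcc : s =ᵐ[volume] Icc (sInf s) (sSup s) :=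
    (hbdd.subset_Icc_sInf_sSup.eventuallyLE).antisymm <|
      Ioo_ae_eq_Icc.symm.le.trans <| LE.le.eventuallyLE <|
        IsConnected.Ioo_csInf_csSup_subset ⟨hne, hs.isPreconnected⟩ hbdd.bddBelow hbdd.bddAbove
  rw [fourier_indicator_one hs.measurableSet, setIntegral_congr_set hIcc,
    integral_Icc_eq_integral_Ioc, ← intervalIntegral.integral_of_le
      (Real.sInf_le_sSup s hbdd.bddBelow hbdd.bddAbove)]
  exact norm_intervalIntegral_fourierChar_le hξ _ _

end FourierCoefficients

section PlanarSets

/-- The Fourier transform at `η` of the vertical section of `W` over `x`, that is, the Fourier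
transform of the indicator function of `W` in the second variable only. -/
noncomputable def sectionFourier (W : Set (ℝ × ℝ)) (η x : ℝ) : ℂ :=
  𝓕 ((Prod.mk x ⁻¹' W).indicator 1 : ℝ → ℂ) η

/-- The Fourier transform at `(ξ, η)` of the indicator function of a planar set. It is written out
because `𝓕` needs an inner product, and the product type `ℝ × ℝ` carries none. -/
noncomputable def indicatorFourier (W : Set (ℝ × ℝ)) (ξ η : ℝ) : ℂ :=
  ∫ p in W, (𝐞 (-(p.1 * ξ + p.2 * η)) : ℂ)

lemma indicatorFourier_preimage_swap (W : Set (ℝ × ℝ)) (ξ η : ℝ) :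
    indicatorFourier (Prod.swap ⁻¹' W) η ξ = indicatorFourier W ξ η := by
  have hswap : MeasurePreserving (Prod.swap : ℝ × ℝ → ℝ × ℝ) volume volume :=
    Measure.measurePreserving_swap
  simpa [indicatorFourier, add_comm] using
    hswap.setIntegral_preimage_emb
      MeasurableEquiv.prodComm.measurableEmbedding
      (fun p : ℝ × ℝ => (𝐞 (-(p.1 * ξ + p.2 * η)) : ℂ)) W

variable {W : Set (ℝ × ℝ)}

lemma fourier_sectionFourier (hW : MeasurableSet W) (hfin : volume W ≠ ∞) (ξ η : ℝ) :
    𝓕 (sectionFourier W η) ξ = indicatorFourier W ξ η := by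
  have hint : Integrable (W.indicator fun p : ℝ × ℝ => (𝐞 (-(p.1 * ξ + p.2 * η)) : ℂ)) :=
    (Measure.integrableOn_of_bounded (M := 1) hfin (by fun_prop)
      (.of_forall fun p => (Circle.norm_coe _).le)).integrable_indicator hW
  rw [indicatorFourier, ← integral_indicator hW, Measure.volume_eq_prod, integral_prod _ hint,
    Real.fourier_real_eq]
  congr with x
  rw [sectionFourier, Real.fourier_real_eq, Circle.smul_def, ← integral_smul]
  congr with y
  by_cases hxy : (x, y) ∈ W
  · simp [hxy, Circle.smul_def, AddChar.map_add_eq_mul, mul_comm]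
  · simp [hxy]

lemma stronglyMeasurable_sectionFourier (hW : MeasurableSet W) (η : ℝ) :
    StronglyMeasurable (sectionFourier W η) := by
  have hjoint : StronglyMeasurable fun p : ℝ × ℝ => (𝐞 (-(p.2 * η)) : ℂ) * W.indicator 1 p :=
    (by fun_prop : Continuous fun p : ℝ × ℝ => (𝐞 (-(p.2 * η)) : ℂ)).stronglyMeasurable.mul
      (stronglyMeasurable_one.indicator hW)
  convert hjoint.integral_prod_right' (ν := volume) using 2 with x
  exact Real.fourier_real_eq _ _

variable {α β : ℝ}

lemma volume_ne_top_of_subset_Icc_prod_Icc (hsub : W ⊆ Icc α (α + 1) ×ˢ Icc β (β + 1)) :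
    volume W ≠ ∞ :=
  measure_ne_top_of_subset hsub (isCompact_Icc.prod isCompact_Icc).measure_ne_top

lemma isBounded_section (hsub : W ⊆ Icc α (α + 1) ×ˢ Icc β (β + 1)) (x : ℝ) :
    Bornology.IsBounded (Prod.mk x ⁻¹' W) :=
  (Metric.isBounded_Icc β (β + 1)).subset fun _ hy => (hsub hy).2

lemma support_sectionFourier_subset (hsub : W ⊆ Icc α (α + 1) ×ˢ Icc β (β + 1)) (η : ℝ) :
    (sectionFourier W η).support ⊆ Icc α (α + 1) := by
  refine Function.support_subset_iff'.2 fun x hx => ?_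
  have hempty : Prod.mk x ⁻¹' W = ∅ := eq_empty_of_forall_notMem fun y hy => hx (hsub hy).1
  rw [sectionFourier, hempty, fourier_indicator_one .empty, setIntegral_empty]

lemma norm_sectionFourier_le_one (hW : MeasurableSet W)
    (hsub : W ⊆ Icc α (α + 1) ×ˢ Icc β (β + 1)) (η x : ℝ) : ‖sectionFourier W η x‖ ≤ 1 := by
  have hvol : volume (Prod.mk x ⁻¹' W) ≤ 1 :=
    calc volume (Prod.mk x ⁻¹' W) ≤ volume (Icc β (β + 1)) := measure_mono fun y hy => (hsub hy).2
      _ = 1 := by simp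
  rw [sectionFourier, fourier_indicator_one (measurable_prodMk_left hW)]
  refine (norm_setIntegral_le_of_norm_le_const (hvol.trans_lt ENNReal.one_lt_top)
    fun y _ => (Circle.norm_coe _).le).trans ?_
  rw [one_mul]
  exact ENNReal.toReal_le_of_le_ofReal zero_le_one (by simpa using hvol)

lemma tsum_enorm_sq_indicatorFourier_eq_lintegral (hW : MeasurableSet W)
    (hsub : W ⊆ Icc α (α + 1) ×ˢ Icc β (β + 1)) (η : ℝ) :
    ∑' k : ℤ, ‖indicatorFourier W k η‖ₑ ^ 2 = ∫⁻ x, ‖sectionFourier W η x‖ₑ ^ 2 := by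
  have hfin := volume_ne_top_of_subset_Icc_prod_Icc hsub
  have hsupp := support_sectionFourier_subset hsub η
  simp only [← fourier_sectionFourier hW hfin]
  refine tsum_enorm_sq_fourier_eq_lintegral ?_ hsupp
  exact (HasCompactSupport.of_support_subset_isCompact isCompact_Icc hsupp).memLp_of_bound
    (stronglyMeasurable_sectionFourier hW η).aestronglyMeasurable 1
    (.of_forall (norm_sectionFourier_le_one hW hsub η))

lemma tsum_enorm_sq_sectionFourier (hW : MeasurableSet W)
    (hsub : W ⊆ Icc α (α + 1) ×ˢ Icc β (β + 1)) (x : ℝ) :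
    ∑' l : ℤ, ‖sectionFourier W l x‖ₑ ^ 2 = volume (Prod.mk x ⁻¹' W) := by
  have hmeas : MeasurableSet (Prod.mk x ⁻¹' W) := measurable_prodMk_left hW
  have hmem : MemLp ((Prod.mk x ⁻¹' W).indicator 1 : ℝ → ℂ) 2 :=
    memLp_indicator_const 2 hmeas 1 (.inr (isBounded_section hsub x).measure_lt_top.ne)
  unfold sectionFourier
  rw [tsum_enorm_sq_fourier_eq_lintegral hmem
      (support_indicator_subset.trans fun y hy => (hsub hy).2),
    ← lintegral_indicator_one hmeas]
  congr with y
  by_cases hy : y ∈ Prod.mk x ⁻¹' W <;> simp [hy]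

lemma tsum_tsum_enorm_sq_indicatorFourier (hW : MeasurableSet W)
    (hsub : W ⊆ Icc α (α + 1) ×ˢ Icc β (β + 1)) :
    ∑' k : ℤ, ∑' l : ℤ, ‖indicatorFourier W k l‖ₑ ^ 2 = volume W := by
  rw [ENNReal.tsum_comm]
  simp only [tsum_enorm_sq_indicatorFourier_eq_lintegral hW hsub]
  rw [← lintegral_tsum fun l : ℤ =>
    ((stronglyMeasurable_sectionFourier hW l).enorm.pow_const 2).aemeasurable]
  simp only [tsum_enorm_sq_sectionFourier hW hsub]
  rw [Measure.volume_eq_prod, Measure.prod_apply hW]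

lemma tsum_enorm_sq_indicatorFourier_le (hW : MeasurableSet W)
    (hsub : W ⊆ Icc α (α + 1) ×ˢ Icc β (β + 1)) (hsec : ∀ x, (Prod.mk x ⁻¹' W).OrdConnected)
    {η : ℝ} (hη : η ≠ 0) :
    ∑' k : ℤ, ‖indicatorFourier W k η‖ₑ ^ 2 ≤
      ENNReal.ofReal (π ^ 2)⁻¹ * ENNReal.ofReal (η ^ 2)⁻¹ := by
  have hbound (x : ℝ) :
      ‖sectionFourier W η x‖ₑ ^ 2 ≤ ENNReal.ofReal (π ^ 2)⁻¹ * ENNReal.ofReal (η ^ 2)⁻¹ := by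
    rw [← ENNReal.ofReal_mul (by positivity), ← ofReal_norm, ← ENNReal.ofReal_pow (norm_nonneg _)]
    refine ENNReal.ofReal_le_ofReal ?_
    calc ‖sectionFourier W η x‖ ^ 2 ≤ (1 / (π * |η|)) ^ 2 := by
          gcongr
          exact norm_fourier_indicator_le_of_ordConnected (hsec x) (isBounded_section hsub x) hη
      _ = (π ^ 2)⁻¹ * (η ^ 2)⁻¹ := by rw [one_div, inv_pow, mul_pow, sq_abs, mul_inv]
  have hsupp : (fun x => ‖sectionFourier W η x‖ₑ ^ 2).support ⊆ Icc α (α + 1) := by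
    simpa [Function.support_pow _ two_ne_zero] using support_sectionFourier_subset hsub η
  calc ∑' k : ℤ, ‖indicatorFourier W k η‖ₑ ^ 2
      = ∫⁻ x in Icc α (α + 1), ‖sectionFourier W η x‖ₑ ^ 2 := by
        rw [tsum_enorm_sq_indicatorFourier_eq_lintegral hW hsub,
          setLIntegral_eq_of_support_subset hsupp]
    _ ≤ ∫⁻ _x in Icc α (α + 1), ENNReal.ofReal (π ^ 2)⁻¹ * ENNReal.ofReal (η ^ 2)⁻¹ :=
        lintegral_mono hbound
    _ = _ := by simp

end PlanarSets

/-- A planar set is orthogonally convex if every horizontal or vertical line meets it in an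
interval. -/
structure IsOrthoconvex (W : Set (ℝ × ℝ)) : Prop where
  ordConnected_vertical (x : ℝ) : (Prod.mk x ⁻¹' W).OrdConnected
  ordConnected_horizontal (y : ℝ) : ((·, y) ⁻¹' W).OrdConnected

lemma IsOrthoconvex.preimage_swap {W : Set (ℝ × ℝ)} (hW : IsOrthoconvex W) :
    IsOrthoconvex (Prod.swap ⁻¹' W) :=
  ⟨hW.ordConnected_horizontal, hW.ordConnected_vertical⟩

lemma isOrthoconvex_of_convex {W : Set (ℝ × ℝ)} (hW : Convex ℝ W) : IsOrthoconvex W where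
  ordConnected_vertical x := by
    have h := hW.affine_preimage (AffineMap.lineMap (k := ℝ) (x, (0 : ℝ)) (x, 1))
    simpa [AffineMap.lineMap_apply, preimage] using h.ordConnected
  ordConnected_horizontal y := by
    have h := hW.affine_preimage (AffineMap.lineMap (k := ℝ) ((0 : ℝ), y) (1, y))
    simpa [AffineMap.lineMap_apply, preimage] using h.ordConnected

lemma prolate2D_apply (M N : ℕ) (W : Set (ℝ × ℝ)) (i j : Fin M × Fin N) :
    prolate2D M N W i j =
      indicatorFourier W ((j.1 - i.1 : ℤ) : ℝ) ((j.2 - i.2 : ℤ) : ℝ) := by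
  refine integral_congr_ae (.of_forall fun p => ?_)
  simp only [Real.fourierChar_apply]
  refine congrArg Complex.exp ?_
  push_cast
  ring

lemma inv_pi_sq_mul_one_add_log_le_log {x : ℝ} (hx : 2 ≤ x) :
    (π ^ 2)⁻¹ * (4 * (1 + log x)) ≤ log x := by
  have hlog : 0.6931471803 < log x := log_two_gt_d9.trans_le (log_le_log zero_lt_two hx)
  have hpi : 3.14 ^ 2 < π ^ 2 := by gcongr; exact pi_gt_d2
  rw [inv_mul_le_iff₀ (by positivity)]
  nlinarith

section OrthoconvexBound

variable {W : Set (ℝ × ℝ)} {α β : ℝ} {M N : ℕ}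

lemma mul_volume_le_sum_enorm_sq_prolate2D_add (hmeas : MeasurableSet W) (hW : IsOrthoconvex W)
    (hsub : W ⊆ Icc α (α + 1) ×ˢ Icc β (β + 1)) (hM : 2 ≤ M) (hN : 2 ≤ N) :
    M * N * volume W ≤ ∑ i : Fin M × Fin N, ∑ j : Fin M × Fin N, ‖prolate2D M N W i j‖ₑ ^ 2 +
      (N * ENNReal.ofReal (log M) + M * ENNReal.ofReal (log N)) := by
  have hcol (l : ℤ) (hl : l ≠ 0) := tsum_enorm_sq_indicatorFourier_le hmeas hsub
    hW.ordConnected_vertical (Int.cast_ne_zero.2 hl)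
  have hrow (k : ℤ) (hk : k ≠ 0) := tsum_enorm_sq_indicatorFourier_le
    (hmeas.preimage measurable_swap) (fun _ hp => (hsub hp).symm)
    hW.preimage_swap.ordConnected_vertical (Int.cast_ne_zero.2 hk)
  simp only [indicatorFourier_preimage_swap] at hrow
  have htail {L : ℕ} (hL : 2 ≤ L) :
      ENNReal.ofReal (π ^ 2)⁻¹ * ENNReal.ofReal (4 * (1 + log L)) ≤ ENNReal.ofReal (log L) := by
    rw [← ENNReal.ofReal_mul (by positivity)]
    exact ENNReal.ofReal_le_ofReal (inv_pi_sq_mul_one_add_log_le_log (mod_cast hL))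
  simp only [← tsum_tsum_enorm_sq_indicatorFourier hmeas hsub, prolate2D_apply]
  refine (mul_tsum_tsum_le_sum_sum_sub_add hrow hcol M N).trans ?_
  gcongr
  exacts [htail hM, htail hN]

theorem parallelogram_band_frobenius_lower_bound_general (hmeas : MeasurableSet W)
    (hW : IsOrthoconvex W) (hsub : W ⊆ Icc α (α + 1) ×ˢ Icc β (β + 1)) (hM : 2 ≤ M) (hN : 2 ≤ N) :
    M * N * volume.real W - (M * log N + N * log M) ≤
      ∑ i : Fin M × Fin N, ∑ j : Fin M × Fin N, ‖prolate2D M N W i j‖ ^ 2 := by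
  have hfrob : ∑ i : Fin M × Fin N, ∑ j : Fin M × Fin N, ‖prolate2D M N W i j‖ₑ ^ 2 =
      ENNReal.ofReal (∑ i : Fin M × Fin N, ∑ j : Fin M × Fin N, ‖prolate2D M N W i j‖ ^ 2) := by
    simp only [ENNReal.ofReal_sum_of_nonneg, Finset.sum_nonneg, sq_nonneg, implies_true,
      ENNReal.ofReal_pow, norm_nonneg, ofReal_norm]
  have hbound := mul_volume_le_sum_enorm_sq_prolate2D_add hmeas hW hsub hM hN
  rw [hfrob, ← ofReal_measureReal (volume_ne_top_of_subset_Icc_prod_Icc hsub),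
    ← ENNReal.ofReal_natCast M, ← ENNReal.ofReal_natCast N] at hbound
  iterate 4 rw [← ENNReal.ofReal_mul (by positivity)] at hbound
  iterate 2 rw [← ENNReal.ofReal_add (by positivity) (by positivity)] at hbound
  linarith [(ENNReal.ofReal_le_ofReal_iff (by positivity)).1 hbound]

end OrthoconvexBound

section ParallelogramBand

lemma pband_eq_preimage_toLin (a b c d u v W0 W1 : ℝ) :
    pband a b c d u v W0 W1 =
      toLin (Module.Basis.finTwoProd ℝ) (Module.Basis.finTwoProd ℝ) !![a, b; c, d] ⁻¹'
        (Icc (u - W0) (u + W0) ×ˢ Icc (v - W1) (v + W1)) := by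
  ext p
  simp only [pband, mem_ofPred_eq, abs_sub_le_iff, mem_preimage, toLin_finTwoProd_apply, mem_prod,
    mem_Icc]
  grind

lemma convex_pband (a b c d u v W0 W1 : ℝ) : Convex ℝ (pband a b c d u v W0 W1) := by
  rw [pband_eq_preimage_toLin]
  exact ((convex_Icc _ _).prod (convex_Icc _ _)).linear_preimage _

lemma measurableSet_pband (a b c d u v W0 W1 : ℝ) :
    MeasurableSet (pband a b c d u v W0 W1) := by
  rw [pband_eq_preimage_toLin]
  exact (measurableSet_Icc.prod measurableSet_Icc).preimage
    (LinearMap.continuous_of_finiteDimensional _).measurable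

lemma volume_real_pband {a b c d : ℝ} (hV : a * d - b * c ≠ 0) (u v : ℝ) {W0 W1 : ℝ}
    (hW0 : 0 ≤ W0) (hW1 : 0 ≤ W1) :
    volume.real (pband a b c d u v W0 W1) = 4 * W0 * W1 / |a * d - b * c| := by
  rw [pband_eq_preimage_toLin, Measure.real, Measure.addHaar_preimage_linearMap _
      (by rwa [LinearMap.det_toLin, det_fin_two_of]),
    LinearMap.det_toLin, det_fin_two_of, Measure.volume_eq_prod, Measure.prod_prod,
    Real.volume_Icc, Real.volume_Icc, ENNReal.toReal_mul, ENNReal.toReal_mul,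
    ENNReal.toReal_ofReal (abs_nonneg _), ENNReal.toReal_ofReal (by linarith),
    ENNReal.toReal_ofReal (by linarith), abs_inv]
  ring

end ParallelogramBand

theorem parallelogram_band_frobenius_lower_bound
    (a b c d u v W0 W1 : ℝ) (hV : a * d - b * c ≠ 0) (hW0 : 0 < W0) (hW1 : 0 < W1)
    (hsub : pband a b c d u v W0 W1 ⊆
      Set.Icc (-(1 / 2) : ℝ) (1 / 2) ×ˢ Set.Icc (-(1 / 2) : ℝ) (1 / 2)) :
    ∃ C : ℝ, 0 < C ∧
      ∀ (M N : ℕ), 2 ≤ M → 2 ≤ N →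
        (M : ℝ) * (N : ℝ) * (4 * W0 * W1 / |a * d - b * c|)
            - C * ((M : ℝ) * Real.log (N : ℝ) + (N : ℝ) * Real.log (M : ℝ))
          ≤ ∑ i : Fin M × Fin N, ∑ j : Fin M × Fin N,
              ‖prolate2D M N (pband a b c d u v W0 W1) i j‖ ^ 2 := by
  have hbox : pband a b c d u v W0 W1 ⊆
      Icc (-(1 / 2)) (-(1 / 2) + 1) ×ˢ Icc (-(1 / 2)) (-(1 / 2) + 1) := by
    norm_num at hsub ⊢
    exact hsub
  refine ⟨1, one_pos, fun M N hM hN => ?_⟩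
  rw [one_mul, ← volume_real_pband hV u v hW0.le hW1.le]
  exact parallelogram_band_frobenius_lower_bound_general (measurableSet_pband ..)
    (isOrthoconvex_of_convex (convex_pband ..)) hbox hM hN
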